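/- arXiv:math/9909053 — 2 statements merged into one kernel-verified Lean document; each statement's English description precedes it below -/
import Mathlib

section
/- Let q, a, B be nonzero complex numbers such that q^m ≠ 1 for all m ≥ 1, a q^m ≠ 1 and a^2 q^{2m} ≠ 1 for all m ≥ 1, and B q^j ≠ 1 and a q^{j+1} ≠ -B for all j ≥ 0 (so that all denominators below are nonzero). Suppose (α_n, β_n) is a Bailey pair with parameters (a^2, q^2). Define α'_r = ((-B;q)_r / (-aq/B;q)_r) · B^{-r} q^{-r(r-1)/2} · α_r and β'_n = ∑_{k=0}^{n} [(-aq;q)_{2k} (B^2;q^2)_k (q^{-k}/B;q)_{n-k} (Bq^{k+1};q)_{n-k} / ((-aq/B;q)_n (B;q)_n (q^2;q^2)_{n-k})] · B^{-k} q^{-k(k-1)/2} · β_k. Then (α'_n, β'_n) is a Bailey pair with parameters (a, q). -/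
/-- The finite q-Pochhammer symbol `(x;q)_n = ∏_{j=0}^{n-1} (1 - x q^j)`. -/
noncomputable def qPoch (x q : ℂ) (n : ℕ) : ℂ := ∏ j ∈ Finset.range n, (1 - x * q ^ j)

/-- `(α, β)` is a Bailey pair with parameters `(a, q)`. -/
def IsBaileyPair (a q : ℂ) (α β : ℕ → ℂ) : Prop :=
  ∀ n : ℕ, β n = ∑ r ∈ Finset.range (n + 1), α r / (qPoch q q (n - r) * qPoch (a * q) q (n + r))

/-!
Substituting the definition of `β` into `β'` and interchanging sums reduces the theorem to the
evaluation of a terminating, balanced `₄φ₃` in base `q²` whose parameters mix `q` and `q²`.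
Cleared of denominators, both sides of that evaluation are polynomials of degree at most `2N` in one
parameter `y`, so they need only be compared at `2N + 1` points:

* at `y = q⁻⁽ᴺ⁺ᵐ⁾`, `0 ≤ m ≤ N`, every summand vanishes, except the last one when `m = N`;
* at `y = c q^{i-N}`, `0 ≤ i < N`, the product of Pochhammer symbols in the summand collapses to a
  polynomial of degree `N - 1` in `q^{2j}`, which is annihilated by the `N`-th `q²`-difference.
-/

open Finset Polynomial

section PolynomialFunctions

/-- The function `f` is given by a polynomial of degree at most `n`. Degrees are bounded rather than
fixed, so that sums of such functions are again of this kind. -/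
def IsPolyFun {R : Type*} [CommSemiring R] (n : ℕ) (f : R → R) : Prop :=
  ∃ P : R[X], P.natDegree ≤ n ∧ ∀ x, P.eval x = f x

namespace IsPolyFun

section CommSemiring

variable {R : Type*} [CommSemiring R] {m n : ℕ} {f g : R → R}

lemma mul (hf : IsPolyFun m f) (hg : IsPolyFun n g) : IsPolyFun (m + n) fun x => f x * g x := by
  obtain ⟨P, hP, hPf⟩ := hf
  obtain ⟨Q, hQ, hQg⟩ := hg
  exact ⟨P * Q, natDegree_mul_le_of_le hP hQ, fun x => by rw [eval_mul, hPf, hQg]⟩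

lemma const_mul (c : R) (hf : IsPolyFun n f) : IsPolyFun n fun x => c * f x := by
  obtain ⟨P, hP, hPf⟩ := hf
  exact ⟨C c * P, (natDegree_C_mul_le c P).trans hP, fun x => by rw [eval_mul, eval_C, hPf]⟩

lemma sum {ι : Type*} {s : Finset ι} {F : ι → R → R} (hF : ∀ i ∈ s, IsPolyFun n (F i)) :
    IsPolyFun n fun x => ∑ i ∈ s, F i x := by
  choose! P hP hPF using hF
  exact ⟨∑ i ∈ s, P i, natDegree_sum_le_of_forall_le s P hP, fun x => by
    rw [eval_finsetSum, sum_congr rfl fun i hi => hPF i hi x]⟩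

lemma prod_linear (u v : ℕ → R) (n : ℕ) :
    IsPolyFun n fun x => ∏ i ∈ range n, (u i + v i * x) := by
  refine ⟨∏ i ∈ range n, (C (v i) * X + C (u i)), ?_, fun x => ?_⟩
  · exact (natDegree_prod_le _ _).trans <|
      (sum_le_card_nsmul _ _ 1 fun i _ => natDegree_linear_le).trans_eq (by simp)
  · simp only [eval_prod, eval_add, eval_mul, eval_C, eval_X, add_comm]

end CommSemiring

lemma eq_of_forall_eq {R ι : Type*} [CommRing R] [IsDomain R] [Fintype ι] {n : ℕ} {f g : R → R}
    (hf : IsPolyFun n f) (hg : IsPolyFun n g) {v : ι → R} (hv : Function.Injective v)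
    (hn : n < Fintype.card ι) (h : ∀ i, f (v i) = g (v i)) : f = g := by
  obtain ⟨P, hP, hPf⟩ := hf
  obtain ⟨Q, hQ, hQg⟩ := hg
  have hPQ : P = Q := eq_of_natDegree_lt_card_of_eval_eq P Q hv
    (fun i => by rw [hPf, hQg, h]) ((max_le hP hQ).trans_lt hn)
  funext x
  rw [← hPf, ← hQg, hPQ]

end IsPolyFun

end PolynomialFunctions

section GaussianBinomial

/-- The Gaussian binomial coefficient in base `p`, defined by a `p`-Pascal rule so that no division
is involved. -/
def gaussBinom {R : Type*} [CommSemiring R] (p : R) : ℕ → ℕ → R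
  | _, 0 => 1
  | 0, _ + 1 => 0
  | n + 1, k + 1 => gaussBinom p n k + p ^ (k + 1) * gaussBinom p n (k + 1)

section CommSemiring

variable {R : Type*} [CommSemiring R] (p : R)

lemma gaussBinom_zero_right (n : ℕ) : gaussBinom p n 0 = 1 := by
  cases n <;> rfl

lemma gaussBinom_succ_succ (n k : ℕ) :
    gaussBinom p (n + 1) (k + 1) = gaussBinom p n k + p ^ (k + 1) * gaussBinom p n (k + 1) :=
  rfl

lemma gaussBinom_eq_zero_of_lt {n k : ℕ} (h : n < k) : gaussBinom p n k = 0 := by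
  induction n generalizing k with
  | zero => obtain ⟨k, rfl⟩ := Nat.exists_eq_add_of_lt h; rfl
  | succ n ih =>
    obtain ⟨k, rfl⟩ := Nat.exists_eq_succ_of_ne_zero (Nat.ne_zero_of_lt h)
    rw [gaussBinom_succ_succ, ih (by omega), ih (by omega), mul_zero, add_zero]

lemma gaussBinom_self (n : ℕ) : gaussBinom p n n = 1 := by
  induction n with
  | zero => rfl
  | succ n ih =>
    rw [gaussBinom_succ_succ, ih, gaussBinom_eq_zero_of_lt p n.lt_succ_self, mul_zero, add_zero]

theorem prod_add_mul_pow_eq_sum_gaussBinom (x y : R) (n : ℕ) :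
    ∏ i ∈ range n, (x + y * p ^ i) =
      ∑ k ∈ antidiagonal n, gaussBinom p n k.1 * p ^ k.2.choose 2 * x ^ k.1 * y ^ k.2 := by
  induction n with
  | zero => simp [gaussBinom_zero_right]
  | succ n ih =>
    have boundary_shift :
        p ^ 0 * gaussBinom p n 0 * p ^ (n + 1).choose 2 * x ^ 0 * y ^ (n + 1) +
          ∑ k ∈ antidiagonal n, p ^ (k.1 + 1) * gaussBinom p n (k.1 + 1) * p ^ k.2.choose 2 *
            x ^ (k.1 + 1) * y ^ k.2 =
        ∑ k ∈ antidiagonal n, p ^ k.1 * gaussBinom p n k.1 * p ^ (k.2 + 1).choose 2 *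
          x ^ k.1 * y ^ (k.2 + 1) := by
      rw [← Nat.sum_antidiagonal_succ (f := fun k => p ^ k.1 * gaussBinom p n k.1 *
        p ^ k.2.choose 2 * x ^ k.1 * y ^ k.2), Nat.sum_antidiagonal_succ',
        gaussBinom_eq_zero_of_lt p n.lt_succ_self]
      simp only [mul_zero, zero_mul, zero_add]
    rw [prod_range_succ, ih, Nat.sum_antidiagonal_succ]
    simp only [gaussBinom_succ_succ, add_mul, sum_add_distrib]
    have zero_term : gaussBinom p (n + 1) 0 = p ^ 0 * gaussBinom p n 0 := by
      simp only [gaussBinom_zero_right, pow_zero, mul_one]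
    rw [zero_term, add_left_comm, boundary_shift, mul_add, sum_mul, sum_mul]
    congr 1 <;> refine sum_congr rfl fun k hk => ?_
    · ring
    · rw [← mem_antidiagonal.mp hk, Nat.choose_succ_succ, Nat.choose_one_right]
      ring

end CommSemiring

/-- The `N`-th `p`-difference annihilates polynomials of degree less than `N`: on the monomial
`t ^ k` it is the `p`-binomial expansion of `∏ i ∈ range N, (p ^ k - p ^ i)`. -/
theorem IsPolyFun.sum_gaussBinom_eq_zero {R : Type*} [CommRing R] {n N : ℕ} {f : R → R}
    (hf : IsPolyFun n f) (hn : n < N) (p : R) :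
    ∑ k ∈ antidiagonal N,
      gaussBinom p N k.1 * (-1) ^ k.2 * p ^ k.2.choose 2 * f (p ^ k.1) = 0 := by
  obtain ⟨P, hP, hPf⟩ := hf
  have monomial_sum (m : ℕ) (hm : m < N) : ∑ k ∈ antidiagonal N,
      gaussBinom p N k.1 * p ^ k.2.choose 2 * (p ^ m) ^ k.1 * (-1) ^ k.2 = 0 := by
    rw [← prod_add_mul_pow_eq_sum_gaussBinom]
    exact prod_eq_zero (mem_range.mpr hm) (by ring)
  simp_rw [← hPf, eval_eq_sum_range' (hP.trans_lt hn), mul_sum]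
  rw [sum_comm]
  refine sum_eq_zero fun m hm => ?_
  rw [← mul_zero (P.coeff m), ← monomial_sum m (mem_range.mp hm), mul_sum]
  exact sum_congr rfl fun k _ => by ring

end GaussianBinomial

section QPochhammer

variable (x q : ℂ)

lemma qPoch_zero : qPoch x q 0 = 1 := prod_range_zero _

lemma qPoch_succ (n : ℕ) : qPoch x q (n + 1) = qPoch x q n * (1 - x * q ^ n) :=
  prod_range_succ _ n

lemma qPoch_add (m n : ℕ) : qPoch x q (m + n) = qPoch x q m * qPoch (x * q ^ m) q n := by
  simp only [qPoch, prod_range_add, pow_add, mul_assoc]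

lemma qPoch_sq_sq (n : ℕ) : qPoch (x ^ 2) (q ^ 2) n = qPoch x q n * qPoch (-x) q n := by
  simp only [qPoch, ← prod_mul_distrib]
  exact prod_congr rfl fun i _ => by ring

/-- Both sides are the quotient of `(x;q)_{t+u} (x q^t;q)_s` by `(x;q)_s`, which may vanish. -/
lemma qPoch_mul_qPoch_exchange {s e t u : ℕ} (h : s + e = t + u) :
    qPoch (x * q ^ s) q t * qPoch (x * q ^ t) q u =
      qPoch (x * q ^ s) q e * qPoch (x * q ^ t) q s := by
  rcases le_total s u with hsu | hus
  · obtain ⟨v, rfl⟩ := Nat.exists_eq_add_of_le hsu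
    obtain rfl : e = t + v := by omega
    rw [qPoch_add _ _ s v, qPoch_add _ _ t v, mul_right_comm x (q ^ t)]
    ring
  · obtain ⟨w, rfl⟩ := Nat.exists_eq_add_of_le hus
    obtain rfl : t = e + w := by omega
    rw [qPoch_add _ _ e w, qPoch_add _ _ u w,
      show x * q ^ (u + w) * q ^ e = x * q ^ (e + w) * q ^ u by ring]
    ring

lemma inv_qPoch_eq_div {m n : ℕ} (h : qPoch x q (m + n) ≠ 0) :
    (qPoch x q m)⁻¹ = qPoch (x * q ^ m) q n / qPoch x q (m + n) := by
  rw [qPoch_add] at h ⊢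
  rw [div_mul_cancel_right₀ (right_ne_zero_of_mul h)]

lemma prod_sub_mul_pow {b : ℂ} (hb : b ≠ 0) (n : ℕ) :
    ∏ i ∈ range n, (b - x * q ^ i) = b ^ n * qPoch (x / b) q n := by
  have h := pow_card_mul_prod (s := range n) (f := fun i => 1 - x / b * q ^ i) (b := b)
  rw [card_range] at h
  rw [qPoch, h]
  exact prod_congr rfl fun i _ => by field_simp

lemma isPolyFun_qPoch (n : ℕ) : IsPolyFun n fun y => qPoch (x * y) q n := by
  convert IsPolyFun.prod_linear (fun _ => 1) (fun i => -(x * q ^ i)) n using 2 with y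
  exact prod_congr rfl fun i _ => by ring

variable {x q}

lemma qPoch_ne_zero {n : ℕ} (h : ∀ i, x * q ^ i ≠ 1) : qPoch x q n ≠ 0 :=
  prod_ne_zero_iff.mpr fun i _ => sub_ne_zero.mpr (h i).symm

lemma qPoch_eq_zero {n i : ℕ} (hi : i < n) (h : x * q ^ i = 1) : qPoch x q n = 0 :=
  prod_eq_zero (mem_range.mpr hi) (by rw [h, sub_self])

lemma qPoch_self_ne_zero (hq : ∀ m : ℕ, 1 ≤ m → q ^ m ≠ 1) (n : ℕ) : qPoch q q n ≠ 0 :=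
  qPoch_ne_zero fun i => by rw [← pow_succ']; exact hq _ i.succ_pos

lemma qPoch_reverse (hq0 : q ≠ 0) (hx : x ≠ 0) (n : ℕ) :
    q ^ n.choose 2 * qPoch (x * q) q n =
      (-(x * q ^ n)) ^ n * qPoch (1 / (x * q ^ n)) q n := by
  have hprod : q ^ n.choose 2 * qPoch (x * q) q n = ∏ i ∈ range n, (-(x * q ^ n) - -1 * q ^ i) := by
    rw [qPoch, ← prod_range_reflect, Nat.choose_two_right, ← sum_range_id, ← prod_pow_eq_pow_sum,
      ← prod_mul_distrib]
    refine prod_congr rfl fun i hi => ?_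
    obtain ⟨s, rfl⟩ := Nat.exists_eq_add_of_lt (mem_range.mp hi)
    rw [show i + s + 1 - 1 - i = s by omega]
    ring
  rw [hprod, prod_sub_mul_pow _ _ (neg_ne_zero.mpr (mul_ne_zero hx (pow_ne_zero n hq0))),
    neg_div_neg_eq]

lemma gaussBinom_mul_qPoch_mul_qPoch (p : ℂ) (j d : ℕ) :
    gaussBinom p (j + d) j * qPoch p p j * qPoch p p d = qPoch p p (j + d) := by
  induction j generalizing d with
  | zero => simp [gaussBinom_zero_right, qPoch_zero]
  | succ j ihj =>
    induction d with
    | zero => simp [gaussBinom_self, qPoch_zero]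
    | succ d _ =>
      have h₁ := ihj (d + 1)
      have h₂ : gaussBinom p (j + (d + 1)) (j + 1) * qPoch p p (j + 1) * qPoch p p d =
        qPoch p p (j + (d + 1)) := by
        rwa [show j + (d + 1) = j + 1 + d by ring]
      rw [show j + 1 + (d + 1) = j + (d + 1) + 1 by ring, gaussBinom_succ_succ,
        qPoch_succ p p (j + (d + 1))]
      rw [qPoch_succ p p d] at h₁ ⊢
      rw [qPoch_succ p p j] at h₂ ⊢
      linear_combination (1 - p * p ^ j) * h₁ + p ^ (j + 1) * (1 - p * p ^ d) * h₂

lemma inv_qPoch_self_mul_qPoch_self {p : ℂ} {j d : ℕ} (h : qPoch p p (j + d) ≠ 0) :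
    (qPoch p p j * qPoch p p d)⁻¹ = gaussBinom p (j + d) j / qPoch p p (j + d) := by
  rw [← gaussBinom_mul_qPoch_mul_qPoch, mul_assoc] at h ⊢
  rw [div_mul_cancel_left₀ (left_ne_zero_of_mul h)]

end QPochhammer

section QuadraticSummation

/-- The part of the summand of the quadratic summation formula that does not come from a
`q²`-difference; `y` is the variable in which the formula is a polynomial identity. -/
noncomputable def quadTerm (q c y : ℂ) (j d : ℕ) : ℂ :=
  qPoch c q (2 * j) * qPoch (c ^ 2 * (q ^ 2) ^ j) (q ^ 2) d *
    (qPoch ((y * q ^ (j + d)) ^ 2) (q ^ 2) j * qPoch (y * q ^ (2 * j + 1)) q (2 * d))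

variable {q c : ℂ}

lemma isPolyFun_quadTerm (j d : ℕ) : IsPolyFun (2 * (j + d)) fun y => quadTerm q c y j d := by
  have hsq : IsPolyFun (j + j) fun y => qPoch ((y * q ^ (j + d)) ^ 2) (q ^ 2) j := by
    simp only [qPoch_sq_sq, mul_comm _ (q ^ (j + d)), ← neg_mul]
    exact (isPolyFun_qPoch _ q j).mul (isPolyFun_qPoch _ q j)
  have hlin : IsPolyFun (2 * d) fun y => qPoch (y * q ^ (2 * j + 1)) q (2 * d) := by
    simp only [mul_comm _ (q ^ (2 * j + 1))]
    exact isPolyFun_qPoch _ q (2 * d)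
  rw [mul_add, two_mul j]
  exact (hsq.mul hlin).const_mul _

lemma quadTerm_eq_zero {y : ℂ} {j d m : ℕ} (hm : m ≤ j + d) (hd : d ≠ 0 ∨ m ≠ j + d)
    (hy : y * q ^ (j + d + m) = 1) : quadTerm q c y j d = 0 := by
  rcases lt_or_ge m j with hmj | hjm
  · have h : (y * q ^ (j + d)) ^ 2 * (q ^ 2) ^ m = 1 := by
      rw [← one_pow 2, ← hy]; ring
    rw [quadTerm, qPoch_eq_zero hmj h, zero_mul, mul_zero]
  · have h : y * q ^ (2 * j + 1) * q ^ (j + d + m - (2 * j + 1)) = 1 := by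
      rw [mul_assoc, ← pow_add, Nat.add_sub_cancel' (by omega), hy]
    rw [quadTerm, qPoch_eq_zero (by omega : j + d + m - (2 * j + 1) < 2 * d) h, mul_zero, mul_zero]

lemma quadTerm_of_eq_mul_pow {y : ℂ} {i s j d : ℕ} (hN : j + d = i + s + 1)
    (hc : c = y * q ^ (s + 1)) :
    quadTerm q c y j d = qPoch c q (2 * i + s + 2) * qPoch (c ^ 2 * (q ^ 2) ^ i) (q ^ 2) (s + 1) *
      (qPoch (c ^ 2 * (q ^ 2) ^ j) (q ^ 2) i * qPoch (y * q * (q ^ 2) ^ j) q s) := by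
  have hlin := qPoch_mul_qPoch_exchange (y * q) q
    (show s + (2 * i + s + 2) = 2 * j + 2 * d by omega)
  have hquad := qPoch_mul_qPoch_exchange (c ^ 2) (q ^ 2) (show i + (s + 1) = j + d by omega)
  have hc' : y * q * q ^ s = c := by rw [hc]; ring
  have hyN : (y * q ^ (j + d)) ^ 2 = c ^ 2 * (q ^ 2) ^ i := by rw [hN, hc]; ring
  rw [hc', pow_mul] at hlin
  rw [quadTerm, hyN, show y * q ^ (2 * j + 1) = y * q * (q ^ 2) ^ j by ring]
  linear_combination (qPoch (c ^ 2 * (q ^ 2) ^ j) (q ^ 2) d *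
    qPoch (c ^ 2 * (q ^ 2) ^ i) (q ^ 2) j) * hlin + (qPoch c q (2 * i + s + 2) *
    qPoch (y * q * (q ^ 2) ^ j) q s) * hquad

lemma sum_gaussBinom_quadTerm_eq_zero (hq0 : q ≠ 0) {y : ℂ} {i N : ℕ} (hi : i < N)
    (hy : y * q ^ N = c * q ^ i) :
    ∑ k ∈ antidiagonal N, gaussBinom (q ^ 2) N k.1 * (-1) ^ k.2 * (q ^ 2) ^ k.2.choose 2 *
      quadTerm q c y k.1 k.2 = 0 := by
  obtain ⟨s, hs⟩ := Nat.exists_eq_add_of_lt hi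
  have hc : c = y * q ^ (s + 1) := by
    refine mul_right_cancel₀ (pow_ne_zero i hq0) ?_
    rw [← hy, hs]
    ring
  have hpoly := ((isPolyFun_qPoch (c ^ 2) (q ^ 2) i).mul (isPolyFun_qPoch (y * q) q s)).const_mul
    (qPoch c q (2 * i + s + 2) * qPoch (c ^ 2 * (q ^ 2) ^ i) (q ^ 2) (s + 1))
  rw [← hpoly.sum_gaussBinom_eq_zero (N := N) (by omega) (q ^ 2)]
  exact sum_congr rfl fun k hk => by
    rw [quadTerm_of_eq_mul_pow ((mem_antidiagonal.mp hk).trans hs) hc]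

lemma quadTerm_zero_of_mul_pow_eq_one (hq0 : q ≠ 0) {y : ℂ} {N : ℕ} (hy : y * q ^ (N + N) = 1) :
    quadTerm q c y N 0 = q ^ N.choose 2 * qPoch (-q) q N * qPoch c q N *
      (qPoch (y * q ^ N) q N * ∏ i ∈ range N, (y * q ^ N - c * q ^ i)) := by
  have hu : q ^ N ≠ 0 := pow_ne_zero N hq0
  have hyu : y * q ^ N = (q ^ N)⁻¹ := by
    rw [pow_add, ← mul_assoc] at hy
    exact eq_inv_of_mul_eq_one_left hy
  have hrev := qPoch_reverse hq0 (neg_ne_zero.mpr one_ne_zero) N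
  rw [neg_one_mul, neg_one_mul, neg_neg, one_div, inv_neg] at hrev
  rw [hrev, prod_sub_mul_pow _ _ (hyu ▸ inv_ne_zero hu), quadTerm, add_zero, mul_zero, qPoch_zero,
    qPoch_zero, qPoch_sq_sq, hyu, two_mul N, qPoch_add, div_inv_eq_mul, inv_pow]
  field_simp

lemma sum_gaussBinom_quadTerm_of_mul_pow_eq_one (hq0 : q ≠ 0) (c : ℂ) {y : ℂ} {m N : ℕ}
    (hm : m ≤ N) (hy : y * q ^ (N + m) = 1) :
    ∑ k ∈ antidiagonal N, gaussBinom (q ^ 2) N k.1 * (-1) ^ k.2 * (q ^ 2) ^ k.2.choose 2 *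
      quadTerm q c y k.1 k.2 =
    q ^ N.choose 2 * qPoch (-q) q N * qPoch c q N *
      (qPoch (y * q ^ N) q N * ∏ i ∈ range N, (y * q ^ N - c * q ^ i)) := by
  have term_eq_zero {k : ℕ × ℕ} (hk : k ∈ antidiagonal N) (hd : k.2 ≠ 0 ∨ m ≠ N) :
      quadTerm q c y k.1 k.2 = 0 := by
    rw [← mem_antidiagonal.mp hk] at hm hd hy
    exact quadTerm_eq_zero hm hd hy
  rcases hm.lt_or_eq with hlt | rfl
  · have hroot : y * q ^ N * q ^ m = 1 := by rw [mul_assoc, ← pow_add, hy]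
    rw [qPoch_eq_zero hlt hroot, zero_mul, mul_zero]
    exact sum_eq_zero fun k hk => by rw [term_eq_zero hk (.inr hlt.ne), mul_zero]
  · rw [sum_eq_single_of_mem (m, 0) (by simp)]
    · rw [gaussBinom_self, quadTerm_zero_of_mul_pow_eq_one hq0 hy]
      simp
    · intro k hk hne
      rw [term_eq_zero hk (.inl fun h₂ => hne (Prod.ext ?_ h₂)), mul_zero]
      simpa [h₂] using mem_antidiagonal.mp hk

lemma pow_injective_of_forall_pow_ne_one (hq0 : q ≠ 0) (hq : ∀ m : ℕ, 1 ≤ m → q ^ m ≠ 1) :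
    Function.Injective fun n : ℕ => q ^ n := by
  have ne_of_lt {m n : ℕ} (hmn : m < n) : q ^ n ≠ q ^ m := fun h => hq (n - m) (by omega) <| by
    rw [pow_sub₀ q hq0 hmn.le, h, mul_inv_cancel₀ (pow_ne_zero m hq0)]
  intro m n h
  by_contra hne
  exact (lt_or_gt_of_ne hne).elim (fun hlt => ne_of_lt hlt h.symm) fun hlt => ne_of_lt hlt h

/-- The points at which the two sides of the quadratic summation formula are compared. -/
noncomputable def quadNode (q c : ℂ) (N : ℕ) : Fin (N + 1) ⊕ Fin N → ℂ :=
  Sum.elim (fun m => (q ^ (N + m : ℕ))⁻¹) fun i => c * q ^ (i : ℕ) / q ^ N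

lemma quadNode_injective (hq0 : q ≠ 0) (hq : ∀ m : ℕ, 1 ≤ m → q ^ m ≠ 1) (hc0 : c ≠ 0)
    (hc : ∀ i : ℕ, c * q ^ i ≠ 1) (N : ℕ) : Function.Injective (quadNode q c N) := by
  have hinj := pow_injective_of_forall_pow_ne_one hq0 hq
  refine Function.Injective.sumElim (fun m m' h => ?_) (fun i i' h => ?_) fun m i h => hc (i + m) ?_
  · exact Fin.ext (Nat.add_left_cancel (hinj (inv_injective h)))
  · exact Fin.ext (hinj (mul_left_cancel₀ hc0 ((div_left_inj' (pow_ne_zero N hq0)).mp h)))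
  · field_simp at h
    rw [pow_add] at h ⊢
    exact mul_left_cancel₀ (pow_ne_zero N hq0) (by linear_combination -h)

/-- Up to normalisation, the evaluation of the balanced series
`₄φ₃(c, cq, y²q^{2N}, q^{-2N}; c², yq, yq²; q², q²)`. -/
theorem sum_gaussBinom_quadTerm (hq0 : q ≠ 0) (hq : ∀ m : ℕ, 1 ≤ m → q ^ m ≠ 1) (hc0 : c ≠ 0)
    (hc : ∀ i : ℕ, c * q ^ i ≠ 1) (N : ℕ) (y : ℂ) :
    ∑ k ∈ antidiagonal N, gaussBinom (q ^ 2) N k.1 * (-1) ^ k.2 * (q ^ 2) ^ k.2.choose 2 *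
      quadTerm q c y k.1 k.2 =
    q ^ N.choose 2 * qPoch (-q) q N * qPoch c q N *
      (qPoch (y * q ^ N) q N * ∏ i ∈ range N, (y * q ^ N - c * q ^ i)) := by
  revert y
  rw [← funext_iff]
  refine IsPolyFun.eq_of_forall_eq (n := 2 * N) (IsPolyFun.sum fun k hk => ?_) ?_
    (quadNode_injective hq0 hq hc0 hc N) ?_ ?_
  · rw [← mem_antidiagonal.mp hk]
    exact (isPolyFun_quadTerm k.1 k.2).const_mul _
  · rw [two_mul]
    refine (IsPolyFun.mul ?_ ?_).const_mul _
    · simp only [mul_comm _ (q ^ N)]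
      exact isPolyFun_qPoch _ q N
    · simp only [sub_eq_neg_add, mul_comm _ (q ^ N)]
      exact IsPolyFun.prod_linear (fun i => -(c * q ^ i)) (fun _ => q ^ N) N
  · simp only [Fintype.card_sum, Fintype.card_fin]
    omega
  · rintro (m | i)
    · refine sum_gaussBinom_quadTerm_of_mul_pow_eq_one hq0 c (Nat.le_of_lt_succ m.is_lt) ?_
      exact inv_mul_cancel₀ (pow_ne_zero _ hq0)
    · have hy : quadNode q c N (.inr i) * q ^ N = c * q ^ (i : ℕ) :=
        div_mul_cancel₀ _ (pow_ne_zero N hq0)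
      rw [sum_gaussBinom_quadTerm_eq_zero hq0 i.is_lt hy,
        prod_eq_zero (mem_range.mpr i.is_lt) (sub_eq_zero.mpr hy), mul_zero, mul_zero]

end QuadraticSummation

section BaseChange

/-- Hypothesis `hM` is the conclusion for the pairs whose sequence `α` is supported at one index. -/
theorem IsBaileyPair.change_base {a p b q : ℂ} {α β : ℕ → ℂ} (hpair : IsBaileyPair a p α β)
    {M : ℕ → ℕ → ℂ} {w : ℕ → ℂ}
    (hM : ∀ r N, ∑ x ∈ antidiagonal N,
      M (r + N) (r + x.1) / (qPoch p p x.1 * qPoch (a * p) p (2 * r + x.1)) =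
        w r / (qPoch q q N * qPoch (b * q) q (2 * r + N))) :
    IsBaileyPair b q (fun r => w r * α r) fun n => ∑ k ∈ range (n + 1), M n k * β k := by
  intro n
  simp only [hpair _, mul_sum]
  rw [sum_comm' (s' := fun r => Ico r (n + 1)) (t' := range (n + 1))
    (by simp only [mem_range, mem_Ico]; omega)]
  refine sum_congr rfl fun r hr => ?_
  obtain ⟨N, rfl⟩ := Nat.exists_eq_add_of_le (Nat.le_of_lt_succ (mem_range.mp hr))
  rw [mul_div_right_comm, Nat.add_sub_cancel_left, show r + N + r = 2 * r + N by ring, ← hM,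
    Nat.sum_antidiagonal_eq_sum_range_succ_mk, sum_Ico_eq_sum_range, sum_mul,
    show r + N + 1 - r = N + 1 by omega]
  refine sum_congr rfl fun j _ => ?_
  rw [Nat.add_sub_cancel_left, add_right_comm, ← two_mul]
  ring

lemma add_choose_two (m n : ℕ) : (m + n).choose 2 = m.choose 2 + n.choose 2 + m * n := by
  induction n with
  | zero => rfl
  | succ n ih =>
    rw [← add_assoc, Nat.choose_succ_succ' _ 1, Nat.choose_succ_succ' n 1, ih,
      Nat.choose_one_right, Nat.choose_one_right]
    ring

/-- The coefficient of `β k` in the sequence `β'` of the base change. -/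
noncomputable def baseChangeKernel (q a B : ℂ) (n k : ℕ) : ℂ :=
  (qPoch (-(a * q)) q (2 * k) * qPoch (B ^ 2) (q ^ 2) k *
      qPoch (q ^ (-(k : ℤ)) / B) q (n - k) * qPoch (B * q ^ (k + 1)) q (n - k)) /
    (qPoch (-(a * q) / B) q n * qPoch B q n * qPoch (q ^ 2) (q ^ 2) (n - k)) *
    B ^ (-(k : ℤ)) * q ^ (-((k * (k - 1) / 2 : ℕ) : ℤ))

/-- The coefficient of `α r` in the sequence `α'` of the base change. -/
noncomputable def baseChangeWeight (q a B : ℂ) (r : ℕ) : ℂ :=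
  qPoch (-B) q r / qPoch (-(a * q) / B) q r * B ^ (-(r : ℤ)) * q ^ (-((r * (r - 1) / 2 : ℕ) : ℤ))

variable {q a B : ℂ}

lemma baseChangeKernel_add_left (hq0 : q ≠ 0) (hB0 : B ≠ 0) {z : ℂ} {k d : ℕ}
    (hz : z * q ^ d = B * q ^ k) :
    baseChangeKernel q a B (k + d) k =
      (-1) ^ d * (q ^ 2) ^ d.choose 2 * (qPoch (-(a * q)) q (2 * k) * qPoch (B ^ 2) (q ^ 2) k *
        qPoch (z * q) q (2 * d)) /
      (B ^ (k + d) * q ^ (k + d).choose 2 * (qPoch (-(a * q) / B) q (k + d) * qPoch B q (k + d) *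
        qPoch (q ^ 2) (q ^ 2) d)) := by
  have hz0 : z ≠ 0 := left_ne_zero_of_mul (hz ▸ mul_ne_zero hB0 (pow_ne_zero k hq0))
  have hzq : B * q ^ (k + 1) = z * q * q ^ d := by linear_combination -q * hz
  have hinv : q ^ (-(k : ℤ)) / B = 1 / (z * q ^ d) := by
    rw [hz, zpow_neg, zpow_natCast, one_div, mul_inv_rev, div_eq_mul_inv]
  have hrev : qPoch (1 / (z * q ^ d)) q d =
      (-1) ^ d * q ^ d.choose 2 * qPoch (z * q) q d / (B * q ^ k) ^ d := by
    rw [mul_assoc, qPoch_reverse hq0 hz0, ← mul_assoc, ← mul_pow, neg_one_mul, neg_neg, hz,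
      mul_div_cancel_left₀]
    exact pow_ne_zero d (mul_ne_zero hB0 (pow_ne_zero k hq0))
  rw [baseChangeKernel, ← Nat.choose_two_right, Nat.add_sub_cancel_left, hzq, hinv, hrev, two_mul d,
    qPoch_add (z * q), add_choose_two, zpow_neg, zpow_neg, zpow_natCast, zpow_natCast]
  simp only [pow_add q, pow_add B]
  field_simp
  ring

/-- With `c = -a q^{2r+1}` and `y = B q^{r-N}`, the summand of the base change is a multiple of the
summand of the quadratic summation formula. -/
lemma baseChangeKernel_div (hq0 : q ≠ 0) (hB0 : B ≠ 0) {y : ℂ} {r j d : ℕ}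
    (hqq : qPoch (q ^ 2) (q ^ 2) (j + d) ≠ 0)
    (haq : qPoch (a ^ 2 * q ^ 2) (q ^ 2) (2 * r + (j + d)) ≠ 0)
    (hy : y * q ^ (j + d) = B * q ^ r) :
    baseChangeKernel q a B (r + (j + d)) (r + j) /
      (qPoch (q ^ 2) (q ^ 2) j * qPoch (a ^ 2 * q ^ 2) (q ^ 2) (2 * r + j)) =
    qPoch (-(a * q)) q (2 * r) * qPoch (B ^ 2) (q ^ 2) r /
      (B ^ (r + (j + d)) * q ^ (r + (j + d)).choose 2 * (qPoch (-(a * q) / B) q (r + (j + d)) *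
        qPoch B q (r + (j + d)) * qPoch (q ^ 2) (q ^ 2) (j + d) *
        qPoch (a ^ 2 * q ^ 2) (q ^ 2) (2 * r + (j + d)))) *
    (gaussBinom (q ^ 2) (j + d) j * (-1) ^ d * (q ^ 2) ^ d.choose 2 *
      quadTerm q (-(a * q) * q ^ (2 * r)) y j d) := by
  have hz : y * q ^ (2 * j) * q ^ d = B * q ^ (r + j) := by
    rw [pow_add q r, ← mul_assoc, ← hy]; ring
  have hBsq : qPoch (B ^ 2) (q ^ 2) (r + j) =
      qPoch (B ^ 2) (q ^ 2) r * qPoch ((B * q ^ r) ^ 2) (q ^ 2) j := by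
    rw [qPoch_add, mul_pow, ← pow_mul, ← pow_mul, mul_comm r]
  have hcsq : a ^ 2 * q ^ 2 * (q ^ 2) ^ (2 * r + j) =
      (-(a * q) * q ^ (2 * r)) ^ 2 * (q ^ 2) ^ j := by ring
  have regroup (t u v w s₁ s₂ : ℂ) :
      t / (u * (v * w)) / (s₁ * s₂) = t / (u * v) * (s₁ * w)⁻¹ * s₂⁻¹ := by ring
  rw [← add_assoc] at haq
  rw [← add_assoc r, ← add_assoc (2 * r), baseChangeKernel_add_left hq0 hB0 hz, regroup,
    inv_qPoch_self_mul_qPoch_self hqq, inv_qPoch_eq_div _ _ haq, hcsq, quadTerm, hy, mul_add 2 r j,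
    qPoch_add _ _ (2 * r) (2 * j), hBsq, pow_succ q (2 * j), ← mul_assoc y]
  ring

lemma baseChangeWeight_div (hq0 : q ≠ 0) (hB0 : B ≠ 0) {r N : ℕ}
    (hqq : qPoch (q ^ 2) (q ^ 2) N ≠ 0)
    (haq : qPoch (a ^ 2 * q ^ 2) (q ^ 2) (2 * r + N) ≠ 0)
    (hB : qPoch B q (r + N) ≠ 0) (haB : qPoch (-(a * q) / B) q (r + N) ≠ 0) :
    qPoch (-(a * q)) q (2 * r) * qPoch (B ^ 2) (q ^ 2) r /
      (B ^ (r + N) * q ^ (r + N).choose 2 * (qPoch (-(a * q) / B) q (r + N) *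
        qPoch B q (r + N) * qPoch (q ^ 2) (q ^ 2) N *
        qPoch (a ^ 2 * q ^ 2) (q ^ 2) (2 * r + N))) *
    (q ^ N.choose 2 * qPoch (-q) q N * qPoch (-(a * q) * q ^ (2 * r)) q N *
      (qPoch (B * q ^ r) q N * ∏ i ∈ range N, (B * q ^ r - -(a * q) * q ^ (2 * r) * q ^ i))) =
    baseChangeWeight q a B r / (qPoch q q N * qPoch (a * q) q (2 * r + N)) := by
  have hBr : B * q ^ r ≠ 0 := mul_ne_zero hB0 (pow_ne_zero r hq0)
  have hdiv : -(a * q) * q ^ (2 * r) / (B * q ^ r) = -(a * q) / B * q ^ r := by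
    field_simp
    ring
  rw [prod_sub_mul_pow _ _ hBr, hdiv, baseChangeWeight, ← Nat.choose_two_right, add_choose_two,
    zpow_neg, zpow_neg, zpow_natCast, zpow_natCast]
  have ha_sq : qPoch (a ^ 2 * q ^ 2) (q ^ 2) (2 * r + N) = qPoch (a * q) q (2 * r + N) *
      (qPoch (-(a * q)) q (2 * r) * qPoch (-(a * q) * q ^ (2 * r)) q N) := by
    rw [← mul_pow, qPoch_sq_sq, qPoch_add (-(a * q))]
  rw [ha_sq] at haq ⊢
  rw [qPoch_sq_sq] at hqq
  rw [qPoch_add] at hB haB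
  obtain ⟨hq_N, hneg_q_N⟩ := mul_ne_zero_iff.mp hqq
  obtain ⟨hB_r, hBq_N⟩ := mul_ne_zero_iff.mp hB
  obtain ⟨haB_r, haBq_N⟩ := mul_ne_zero_iff.mp haB
  obtain ⟨hneg_a_2r, hneg_aq_N⟩ := mul_ne_zero_iff.mp (right_ne_zero_of_mul haq)
  rw [qPoch_sq_sq, qPoch_sq_sq, qPoch_add B, qPoch_add (-(a * q) / B), mul_pow, pow_add B,
    pow_add q, pow_add q, ← pow_mul q]
  -- Otherwise `field_simp` rewrites the arguments of `qPoch` in the goal only.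
  generalize -(a * q) / B = e at haB_r haBq_N ⊢
  generalize -(a * q) = c at hneg_a_2r hneg_aq_N ⊢
  field_simp

theorem sum_baseChangeKernel_div (hq0 : q ≠ 0) (ha0 : a ≠ 0) (hB0 : B ≠ 0)
    (hq : ∀ m : ℕ, 1 ≤ m → q ^ m ≠ 1) (ha : ∀ m : ℕ, 1 ≤ m → a ^ 2 * q ^ (2 * m) ≠ 1)
    (hB : ∀ j : ℕ, B * q ^ j ≠ 1) (haB : ∀ j : ℕ, a * q ^ (j + 1) ≠ -B) (r N : ℕ) :
    ∑ x ∈ antidiagonal N, baseChangeKernel q a B (r + N) (r + x.1) /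
      (qPoch (q ^ 2) (q ^ 2) x.1 * qPoch (a ^ 2 * q ^ 2) (q ^ 2) (2 * r + x.1)) =
    baseChangeWeight q a B r / (qPoch q q N * qPoch (a * q) q (2 * r + N)) := by
  have hqq : qPoch (q ^ 2) (q ^ 2) N ≠ 0 :=
    qPoch_self_ne_zero (fun m hm => by rw [← pow_mul]; exact hq _ (by omega)) N
  have haq : qPoch (a ^ 2 * q ^ 2) (q ^ 2) (2 * r + N) ≠ 0 := qPoch_ne_zero fun i => by
    rw [mul_assoc, ← pow_succ', ← pow_mul]
    exact ha (i + 1) i.succ_pos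
  have haB' : qPoch (-(a * q) / B) q (r + N) ≠ 0 := qPoch_ne_zero fun i h => haB i <| by
    field_simp at h
    linear_combination -h
  have hc0 : -(a * q) * q ^ (2 * r) ≠ 0 := by simp [ha0, hq0]
  have hc (i : ℕ) : -(a * q) * q ^ (2 * r) * q ^ i ≠ 1 := fun h =>
    ha (2 * r + i + 1) (by omega) <| by
      linear_combination (-(a * q) * q ^ (2 * r) * q ^ i + 1) * h
  have hy : B * q ^ r / q ^ N * q ^ N = B * q ^ r := div_mul_cancel₀ _ (pow_ne_zero N hq0)
  have hsum := sum_gaussBinom_quadTerm hq0 hq hc0 hc N (B * q ^ r / q ^ N)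
  rw [hy] at hsum
  rw [← baseChangeWeight_div hq0 hB0 hqq haq (qPoch_ne_zero hB) haB', ← hsum, mul_sum]
  refine sum_congr rfl fun x hx => ?_
  obtain rfl := mem_antidiagonal.mp hx
  exact baseChangeKernel_div hq0 hB0 hqq haq hy

end BaseChange

/-- Theorem 2.1: base change from `(a², q²)` to `(a, q)`. -/
theorem bailey_base_change_thm21 (q a B : ℂ)
    (hq : q ≠ 0) (ha : a ≠ 0) (hB : B ≠ 0)
    (hq1 : ∀ m : ℕ, 1 ≤ m → q ^ m ≠ 1)
    (ha1 : ∀ m : ℕ, 1 ≤ m → a * q ^ m ≠ 1)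
    (ha2 : ∀ m : ℕ, 1 ≤ m → a ^ 2 * q ^ (2 * m) ≠ 1)
    (hB1 : ∀ j : ℕ, B * q ^ j ≠ 1)
    (hB2 : ∀ j : ℕ, a * q ^ (j + 1) ≠ -B)
    (α β : ℕ → ℂ)
    (hpair : IsBaileyPair (a ^ 2) (q ^ 2) α β) :
    IsBaileyPair a q
      (fun r => qPoch (-B) q r / qPoch (-(a * q) / B) q r * B ^ (-(r : ℤ)) *
        q ^ (-((r * (r - 1) / 2 : ℕ) : ℤ)) * α r)
      (fun n => ∑ k ∈ Finset.range (n + 1),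
        (qPoch (-(a * q)) q (2 * k) * qPoch (B ^ 2) (q ^ 2) k *
            qPoch (q ^ (-(k : ℤ)) / B) q (n - k) * qPoch (B * q ^ (k + 1)) q (n - k)) /
          (qPoch (-(a * q) / B) q n * qPoch B q n * qPoch (q ^ 2) (q ^ 2) (n - k)) *
          B ^ (-(k : ℤ)) * q ^ (-((k * (k - 1) / 2 : ℕ) : ℤ)) * β k) := by
  exact hpair.change_base (sum_baseChangeKernel_div hq ha hB hq1 ha2 hB1 hB2)
end

section
/- (Andrews–Gordon identities.) Let q be a complex number with 0 < |q| < 1, and let k ≥ 2 and 0 ≤ i ≤ k-1 be integers. Then ∑_{s_1 ≥ s_2 ≥ ⋯ ≥ s_{k-1} ≥ 0} q^{s_1^2 + ⋯ + s_{k-1}^2 + s_{k-i} + ⋯ + s_{k-1}} / [(q;q)_{s_1-s_2} (q;q)_{s_2-s_3} ⋯ (q;q)_{s_{k-2}-s_{k-1}} (q;q)_{s_{k-1}}] = (q^{2k+1}, q^{k-i}, q^{k+i+1}; q^{2k+1})_∞ / (q;q)_∞, where the linear term s_{k-i} + ⋯ + s_{k-1} is empty (equal to 0) when i = 0. -/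
/-- The infinite q-Pochhammer symbol `(x;q)_∞ = ∏_{j=0}^{∞} (1 - x q^j)`. -/
noncomputable def qPochInf (x q : ℂ) : ℂ := ∏' j : ℕ, (1 - x * q ^ j)

/-!
The proof climbs a Bailey chain with bilateral Bailey pairs
`β_n = ∑_{r ∈ ℤ} α_r / ((q;q)_{n+e+r} (q;q)_{n-r})`, relative to `q^e` with `e ∈ {0, 1}`.

The finite Jacobi triple product makes the theta terms `α_r = (-1)^r q^{r(r-1)/2} z^r` into a Bailey
pair with `β_n` a multiple of `(z;q)_n`. At `z = 1` this is the unit pair `β_n = [n = 0]`. By the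
`q`-Vandermonde sum, a Bailey step multiplies `α_r` by `q^{r² + er}`, which gives theta terms again,
and adds one summation to `β`. After `i + 1` steps relative to `q`, the sequence `α` has the
antisymmetry that allows `e` to be lowered from `1` to `0`, and `k - 1 - i` further steps without
the linear exponent follow. As `n → ∞`, the `β` side tends to the multisum divided by `(q;q)_∞`,
and the `α` side to a theta series divided by `(q;q)_∞²`; the Jacobi triple product, itself the
limit of its finite form, evaluates that series.
-/

namespace AndrewsGordon

open Filter Topology

variable {q z : ℂ}

@[simp]
theorem qPoch_zero (x q : ℂ) : qPoch x q 0 = 1 := Finset.prod_range_zero _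

theorem qPoch_succ (x q : ℂ) (n : ℕ) : qPoch x q (n + 1) = qPoch x q n * (1 - x * q ^ n) :=
  Finset.prod_range_succ _ _

theorem qPoch_one_left (q : ℂ) {n : ℕ} (hn : n ≠ 0) : qPoch 1 q n = 0 :=
  Finset.prod_eq_zero (Finset.mem_range.2 hn.bot_lt) (by simp)

theorem one_sub_pow_ne_zero (hq1 : ‖q‖ < 1) {n : ℕ} (hn : n ≠ 0) : 1 - q ^ n ≠ 0 := by
  refine sub_ne_zero.2 fun h ↦ (pow_lt_one₀ (norm_nonneg q) hq1 hn).ne ?_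
  rw [← norm_pow, ← h, norm_one]

theorem one_sub_mul_pow_ne_zero (hq1 : ‖q‖ < 1) (n : ℕ) : 1 - q * q ^ n ≠ 0 := by
  simpa only [pow_succ'] using one_sub_pow_ne_zero hq1 n.succ_ne_zero

theorem qPoch_self_ne_zero (hq1 : ‖q‖ < 1) (n : ℕ) : qPoch q q n ≠ 0 :=
  Finset.prod_ne_zero_iff.2 fun j _ ↦ one_sub_mul_pow_ne_zero hq1 j

theorem summable_norm_neg_mul_pow (hq1 : ‖q‖ < 1) (x : ℂ) :
    Summable fun j : ℕ ↦ ‖-(x * q ^ j)‖ := by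
  simpa only [norm_neg, norm_mul, norm_pow] using
    (summable_geometric_of_lt_one (norm_nonneg q) hq1).mul_left ‖x‖

theorem tendsto_qPoch (hq1 : ‖q‖ < 1) (x : ℂ) :
    Tendsto (qPoch x q) atTop (𝓝 (qPochInf x q)) := by
  have hmul := multipliable_one_add_of_summable (summable_norm_neg_mul_pow hq1 x)
  simp only [← sub_eq_add_neg] at hmul
  exact hmul.tendsto_prod_tprod_nat

theorem qPochInf_self_ne_zero (hq1 : ‖q‖ < 1) : qPochInf q q ≠ 0 := by
  have hne := tprod_one_add_ne_zero_of_summable (f := fun j : ℕ ↦ -(q * q ^ j))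
    (fun j ↦ by simpa only [← sub_eq_add_neg] using one_sub_mul_pow_ne_zero hq1 j)
    (summable_norm_neg_mul_pow hq1 q)
  simpa only [qPochInf, sub_eq_add_neg] using hne

/-- The reciprocal `1 / (q;q)_m` for an integer `m`, with the usual convention that it vanishes
for `m < 0`; this makes all sums below unrestricted. -/
noncomputable def qPochInv (q : ℂ) (m : ℤ) : ℂ := if m < 0 then 0 else (qPoch q q m.toNat)⁻¹

theorem qPochInv_of_neg (q : ℂ) {m : ℤ} (hm : m < 0) : qPochInv q m = 0 := if_pos hm

theorem qPochInv_of_nonneg (q : ℂ) {m : ℤ} (hm : 0 ≤ m) :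
    qPochInv q m = (qPoch q q m.toNat)⁻¹ := if_neg hm.not_gt

theorem qPochInv_natCast (q : ℂ) (n : ℕ) : qPochInv q n = (qPoch q q n)⁻¹ :=
  qPochInv_of_nonneg q n.cast_nonneg

@[simp]
theorem qPochInv_zero (q : ℂ) : qPochInv q 0 = 1 := by simp [qPochInv]

theorem qPochInv_sub_one (hq1 : ‖q‖ < 1) (m : ℤ) :
    qPochInv q (m - 1) = (1 - q ^ m) * qPochInv q m := by
  obtain hm | rfl | hm := lt_trichotomy m 0
  · rw [qPochInv_of_neg q hm, qPochInv_of_neg q (by lia), mul_zero]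
  · simp [qPochInv_of_neg]
  · obtain ⟨n, rfl⟩ : ∃ n : ℕ, m = n + 1 := ⟨(m - 1).toNat, by lia⟩
    have hne := one_sub_mul_pow_ne_zero hq1 n
    rw [add_sub_cancel_right, ← Nat.cast_succ, qPochInv_natCast, qPochInv_natCast, zpow_natCast,
      qPoch_succ, pow_succ']
    field_simp

theorem tendsto_qPochInv (hq1 : ‖q‖ < 1) :
    Tendsto (qPochInv q) atTop (𝓝 (qPochInf q q)⁻¹) := by
  have htoNat : Tendsto Int.toNat atTop atTop :=
    tendsto_atTop.2 fun b ↦ (eventually_ge_atTop (b : ℤ)).mono fun m hm ↦ by lia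
  refine (((tendsto_qPoch hq1 q).inv₀ (qPochInf_self_ne_zero hq1)).comp htoNat).congr' ?_
  filter_upwards [eventually_ge_atTop 0] with m hm
  exact (qPochInv_of_nonneg q hm).symm

theorem tendsto_qPochInv_natCast_add (hq1 : ‖q‖ < 1) (a : ℤ) :
    Tendsto (fun n : ℕ ↦ qPochInv q (n + a)) atTop (𝓝 (qPochInf q q)⁻¹) :=
  (tendsto_qPochInv hq1).comp (tendsto_atTop_add_const_right _ a tendsto_natCast_atTop_atTop)

theorem exists_norm_qPochInv_le (hq1 : ‖q‖ < 1) : ∃ C, ∀ m, ‖qPochInv q m‖ ≤ C := by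
  obtain ⟨C, hC⟩ := (tendsto_qPochInv_natCast_add hq1 0).norm.bddAbove_range
  have hnat (n : ℕ) : ‖qPochInv q n‖ ≤ C := hC ⟨n, by simp⟩
  refine ⟨C, fun m ↦ ?_⟩
  obtain hm | hm := lt_or_ge m 0
  · simpa [qPochInv_of_neg q hm] using (norm_nonneg _).trans (hnat 0)
  · simpa [Int.toNat_of_nonneg hm] using hnat m.toNat

/-- The term `(-1)^r q^{r(r-1)/2} z^r` of the bilateral theta series. -/
noncomputable def thetaTerm (q z : ℂ) (r : ℤ) : ℂ := (-1) ^ r * q ^ (r * (r - 1) / 2) * z ^ r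

theorem two_mul_mul_sub_one_ediv_two (r : ℤ) : 2 * (r * (r - 1) / 2) = r * (r - 1) :=
  Int.two_mul_ediv_two_of_even (Int.even_mul_pred_self r)

@[simp]
theorem thetaTerm_zero (q z : ℂ) : thetaTerm q z 0 = 1 := by simp [thetaTerm]

theorem thetaTerm_add_one (hq : q ≠ 0) (hz : z ≠ 0) (r : ℤ) :
    thetaTerm q z (r + 1) = -(z * q ^ r) * thetaTerm q z r := by
  have hexp : (r + 1) * (r + 1 - 1) / 2 = r * (r - 1) / 2 + r := by
    linarith [two_mul_mul_sub_one_ediv_two r, two_mul_mul_sub_one_ediv_two (r + 1)]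
  rw [thetaTerm, thetaTerm, hexp, zpow_add₀ hq, zpow_add_one₀ hz, zpow_add_one₀ (by simp)]
  ring

theorem thetaTerm_neg (hq : q ≠ 0) (z : ℂ) (r : ℤ) :
    thetaTerm q z (-r) = thetaTerm q (q / z) r := by
  have hexp : -r * (-r - 1) / 2 = r * (r - 1) / 2 + r := by
    linarith [two_mul_mul_sub_one_ediv_two r, two_mul_mul_sub_one_ediv_two (-r)]
  have hsign : (-1 : ℂ) ^ (-r) = (-1) ^ r := by rw [zpow_neg, ← inv_zpow, inv_neg_one]
  rw [thetaTerm, thetaTerm, hexp, hsign, zpow_add₀ hq, div_zpow, zpow_neg]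
  ring

theorem thetaTerm_mul_zpow (hq : q ≠ 0) (Q z : ℂ) (e r : ℤ) :
    thetaTerm Q z r * q ^ (r ^ 2 + e * r) = thetaTerm (Q * q ^ 2) (z * q ^ (e + 1)) r := by
  have hexp : r ^ 2 + e * r = 2 * (r * (r - 1) / 2) + (e + 1) * r := by
    rw [two_mul_mul_sub_one_ediv_two]
    ring
  rw [thetaTerm, thetaTerm, hexp, zpow_add₀ hq, zpow_mul, zpow_mul, mul_zpow, mul_zpow]
  norm_cast
  ring

theorem thetaTerm_neg_one_sub (hq : q ≠ 0) (hz : z ≠ 0) (r : ℤ) :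
    thetaTerm (q * z) z (-1 - r) = -(q ^ (2 * r + 1) * thetaTerm (q * z) z r) := by
  have hqz : q * z ≠ 0 := mul_ne_zero hq hz
  rw [show -1 - r = -(r + 1) by ring, thetaTerm_neg hqz, mul_div_cancel_right₀ q hz,
    thetaTerm_add_one hqz hq, thetaTerm, thetaTerm, zpow_add_one₀ hq, two_mul, zpow_add₀ hq,
    mul_zpow q z r]
  ring

theorem summable_thetaTerm_natCast (hq : q ≠ 0) (hq1 : ‖q‖ < 1) (hz : z ≠ 0) :
    Summable fun n : ℕ ↦ thetaTerm q z n := by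
  have hratio : Tendsto (fun n : ℕ ↦ ‖-(z * q ^ n)‖) atTop (𝓝 0) :=
    (summable_norm_neg_mul_pow hq1 z).tendsto_atTop_zero
  refine summable_of_ratio_norm_eventually_le (r := 1 / 2) (by norm_num) ?_
  filter_upwards [hratio.eventually_le_const (show (0 : ℝ) < 1 / 2 by norm_num)] with n hn
  rw [Nat.cast_succ, thetaTerm_add_one hq hz, norm_mul, zpow_natCast]
  gcongr

theorem summable_thetaTerm (hq : q ≠ 0) (hq1 : ‖q‖ < 1) (hz : z ≠ 0) :
    Summable (thetaTerm q z) := by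
  refine .of_nat_of_neg (summable_thetaTerm_natCast hq hq1 hz) ?_
  simpa only [thetaTerm_neg hq] using summable_thetaTerm_natCast hq hq1 (div_ne_zero hq hz)

/-- The kernel `1 / ((q;q)_{a+r} (q;q)_{b-r})`, which is supported on `-a ≤ r ≤ b`. -/
noncomputable def baileyKernel (q : ℂ) (a b r : ℤ) : ℂ := qPochInv q (a + r) * qPochInv q (b - r)

theorem baileyKernel_eq_zero (q : ℂ) {a b r : ℤ} (h : r ∉ Set.Icc (-a) b) :
    baileyKernel q a b r = 0 := by
  rw [Set.mem_Icc, not_and_or] at h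
  obtain h | h := h
  · rw [baileyKernel, qPochInv_of_neg q (m := a + r) (by lia), zero_mul]
  · rw [baileyKernel, qPochInv_of_neg q (m := b - r) (by lia), mul_zero]

theorem summable_mul_baileyKernel (q : ℂ) (α : ℤ → ℂ) (a b : ℤ) :
    Summable fun r ↦ α r * baileyKernel q a b r :=
  summable_of_hasFiniteSupport <| (Set.finite_Icc (-a) b).subset fun _ hr ↦
    of_not_not fun h ↦ hr <| by simp only [baileyKernel_eq_zero q h, mul_zero]

theorem baileyKernel_neg (q : ℂ) (a b r : ℤ) : baileyKernel q a b (-r) = baileyKernel q b a r := by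
  rw [baileyKernel, baileyKernel, mul_comm, sub_neg_eq_add, ← sub_eq_add_neg]

theorem baileyKernel_add_one_right (hq : q ≠ 0) (hq1 : ‖q‖ < 1) (a b r : ℤ) :
    (1 - q ^ (a + b + 1)) * baileyKernel q a (b + 1) r =
      baileyKernel q a b r + q ^ (b + 1 - r) * baileyKernel q a b (r - 1) := by
  have hleft := qPochInv_sub_one hq1 (a + r)
  have hright := qPochInv_sub_one hq1 (b + 1 - r)
  rw [baileyKernel, baileyKernel, baileyKernel, show b - r = b + 1 - r - 1 by ring, hright,
    show a + (r - 1) = a + r - 1 by ring, hleft, show b - (r - 1) = b + 1 - r by ring,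
    show a + b + 1 = (a + r) + (b + 1 - r) by ring, zpow_add₀ hq]
  ring

theorem tsum_thetaTerm_mul_baileyKernel_add_one (hq : q ≠ 0) (hq1 : ‖q‖ < 1) (hz : z ≠ 0)
    (a b : ℤ) :
    (1 - q ^ (a + b + 1)) * ∑' r, thetaTerm q z r * baileyKernel q a (b + 1) r =
      (1 - z * q ^ b) * ∑' r, thetaTerm q z r * baileyKernel q a b r := by
  have hterm (r : ℤ) :
      (1 - q ^ (a + b + 1)) * (thetaTerm q z (r + 1) * baileyKernel q a (b + 1) (r + 1)) =
        thetaTerm q z (r + 1) * baileyKernel q a b (r + 1) -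
          z * q ^ b * (thetaTerm q z r * baileyKernel q a b r) := by
    rw [mul_left_comm, baileyKernel_add_one_right hq hq1, add_sub_cancel_right,
      show b + 1 - (r + 1) = b - r by ring, mul_add, thetaTerm_add_one hq hz, zpow_sub₀ hq]
    field_simp [zpow_ne_zero r hq]
    ring
  have hshift (f : ℤ → ℂ) : ∑' r, f (r + 1) = ∑' r, f r := (Equiv.addRight (1 : ℤ)).tsum_eq f
  have hsum := summable_mul_baileyKernel q (thetaTerm q z) a b
  have hsum_shift : Summable fun r : ℤ ↦ thetaTerm q z (r + 1) * baileyKernel q a b (r + 1) :=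
    (Equiv.addRight (1 : ℤ)).summable_iff.2 hsum
  rw [← hshift fun r ↦ thetaTerm q z r * baileyKernel q a (b + 1) r, ← tsum_mul_left,
    tsum_congr hterm, hsum_shift.tsum_sub (hsum.mul_left _), tsum_mul_left,
    hshift fun r ↦ thetaTerm q z r * baileyKernel q a b r]
  ring

theorem tsum_thetaTerm_mul_baileyKernel_swap (hq : q ≠ 0) (z : ℂ) (a b : ℤ) :
    ∑' r, thetaTerm q z r * baileyKernel q a b r =
      ∑' r, thetaTerm q (q / z) r * baileyKernel q b a r := by
  rw [← tsum_comp_neg]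
  simp only [thetaTerm_neg hq, baileyKernel_neg]

theorem qPoch_mul_tsum_thetaTerm_mul_baileyKernel (hq : q ≠ 0) (hq1 : ‖q‖ < 1) (hz : z ≠ 0)
    (a b : ℕ) :
    qPoch q q (a + b) * ∑' r, thetaTerm q z r * baileyKernel q a b r =
      qPoch z q b * (qPoch q q a * ∑' r, thetaTerm q z r * baileyKernel q a 0 r) := by
  induction b with
  | zero => simp
  | succ b ih =>
    have hrec := tsum_thetaTerm_mul_baileyKernel_add_one hq hq1 hz a b
    norm_cast at hrec
    rw [← add_assoc, qPoch_succ, qPoch_succ, ← pow_succ', mul_assoc, hrec, mul_left_comm, ih]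
    ring

theorem finite_jacobi_triple_product (hq : q ≠ 0) (hq1 : ‖q‖ < 1) (hz : z ≠ 0) (a b : ℕ) :
    qPoch q q (a + b) * ∑' r, thetaTerm q z r * baileyKernel q a b r =
      qPoch z q b * qPoch (q / z) q a := by
  have horigin : ∑' r, thetaTerm q (q / z) r * baileyKernel q (0 : ℕ) 0 r = 1 := by
    rw [tsum_eq_single 0 fun r hr ↦ by rw [baileyKernel_eq_zero q (by simpa), mul_zero]]
    simp [baileyKernel]
  have hswap := qPoch_mul_tsum_thetaTerm_mul_baileyKernel hq hq1 (div_ne_zero hq hz) 0 a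
  rw [horigin, zero_add] at hswap
  rw [qPoch_mul_tsum_thetaTerm_mul_baileyKernel hq hq1 hz,
    tsum_thetaTerm_mul_baileyKernel_swap hq, ← Nat.cast_zero, hswap]
  simp

/-- `(α, β)` is a bilateral Bailey pair relative to `q ^ e`: the sum runs over all integers, so a
classical pair has its `α` spread over `r` and `-e - r`. -/
def IsBaileyPair (q : ℂ) (e : ℕ) (α : ℤ → ℂ) (β : ℕ → ℂ) : Prop :=
  ∀ n : ℕ, β n = ∑' r, α r * baileyKernel q (n + e) n r

theorem isBaileyPair_thetaTerm (hq : q ≠ 0) (hq1 : ‖q‖ < 1) (hz : z ≠ 0) (e : ℕ) :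
    IsBaileyPair q e (thetaTerm q z) fun n ↦
      (qPoch q q (n + e + n))⁻¹ * (qPoch z q n * qPoch (q / z) q (n + e)) := by
  intro n
  dsimp only
  rw [← finite_jacobi_triple_product hq hq1 hz,
    inv_mul_cancel_left₀ (qPoch_self_ne_zero hq1 _), Nat.cast_add]

theorem isBaileyPair_thetaTerm_one (hq : q ≠ 0) (hq1 : ‖q‖ < 1) (e : ℕ) :
    IsBaileyPair q e (thetaTerm q 1) (Pi.single 0 1) := by
  intro n
  rw [← isBaileyPair_thetaTerm hq hq1 one_ne_zero e n]
  obtain rfl | hn := eq_or_ne n 0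
  · simp [qPoch_self_ne_zero hq1 e]
  · simp [qPoch_one_left q hn, hn]

theorem IsBaileyPair.tendsto {e : ℕ} {α : ℤ → ℂ} {β : ℕ → ℂ} (h : IsBaileyPair q e α β)
    (hq1 : ‖q‖ < 1) (hα : Summable α) :
    Tendsto β atTop (𝓝 ((∑' r, α r) * ((qPochInf q q)⁻¹ * (qPochInf q q)⁻¹))) := by
  obtain ⟨C, hC⟩ := exists_norm_qPochInv_le hq1
  have hC0 : 0 ≤ C := (norm_nonneg _).trans (hC 0)
  rw [← tsum_mul_right, funext h]
  refine tendsto_tsum_of_dominated_convergence (bound := fun r ↦ ‖α r‖ * (C * C))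
    (hα.norm.mul_right _) (fun r ↦ Tendsto.const_mul _ ?_) (.of_forall fun n r ↦ ?_)
  · simp only [baileyKernel, add_assoc, sub_eq_add_neg]
    exact (tendsto_qPochInv_natCast_add hq1 _).mul (tendsto_qPochInv_natCast_add hq1 _)
  · rw [norm_mul, baileyKernel, norm_mul]
    gcongr <;> apply hC

theorem jacobi_triple_product (hq : q ≠ 0) (hq1 : ‖q‖ < 1) (hz : z ≠ 0) :
    ∑' r, thetaTerm q z r = qPochInf q q * qPochInf z q * qPochInf (q / z) q := by
  have htheta := (isBaileyPair_thetaTerm hq hq1 hz 0).tendsto hq1 (summable_thetaTerm hq hq1 hz)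
  have hdouble : Tendsto (fun n : ℕ ↦ n + n) atTop atTop := tendsto_id.atTop_add_atTop tendsto_id
  have hprod := (((tendsto_qPoch hq1 q).comp hdouble).inv₀ (qPochInf_self_ne_zero hq1)).mul
    ((tendsto_qPoch hq1 z).mul (tendsto_qPoch hq1 (q / z)))
  have heq := tendsto_nhds_unique htheta hprod
  have hne := qPochInf_self_ne_zero hq1
  field_simp at heq
  exact heq

/-- The kernels relative to `q ^ (e + 1)` and `q ^ e` differ by a factor `1 - q ^ (n + e + 1 + r)`;
the correction is odd under `r ↦ -(e + 1) - r`, which fixes the former, so it sums to zero. -/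
theorem IsBaileyPair.lower {e : ℕ} {α : ℤ → ℂ} {β : ℕ → ℂ} (h : IsBaileyPair q (e + 1) α β)
    (hq : q ≠ 0) (hq1 : ‖q‖ < 1)
    (hα : ∀ r, α (-(e + 1) - r) = -(q ^ (2 * r + e + 1) * α r)) : IsBaileyPair q e α β := by
  intro n
  have hkernel (r : ℤ) : α r * baileyKernel q (n + e) n r =
      α r * baileyKernel q (n + (e + 1)) n r -
        q ^ (n + (e + 1) : ℤ) * (α r * q ^ r * baileyKernel q (n + (e + 1)) n r) := by
    have hstep := qPochInv_sub_one hq1 (n + (e + 1) + r)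
    rw [baileyKernel, baileyKernel, show (n + e + r : ℤ) = n + (e + 1) + r - 1 by ring, hstep,
      zpow_add₀ hq _ r]
    ring
  have hodd (r : ℤ) :
      α (-(e + 1) - r) * q ^ (-(e + 1) - r) * baileyKernel q (n + (e + 1)) n (-(e + 1) - r) =
        -(α r * q ^ r * baileyKernel q (n + (e + 1)) n r) := by
    have hreflect : baileyKernel q (n + (e + 1)) n (-(e + 1) - r) =
        baileyKernel q (n + (e + 1)) n r := by
      rw [baileyKernel, baileyKernel, mul_comm]
      congr 2 <;> ring
    rw [hα, hreflect, neg_mul, mul_right_comm, ← zpow_add₀ hq, neg_mul, mul_comm (q ^ _)]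
    congr 4
    ring
  have hzero : ∑' r, α r * q ^ r * baileyKernel q (n + (e + 1)) n r = 0 := by
    rw [← self_eq_neg, ← tsum_neg, ← tsum_congr hodd]
    exact ((Equiv.subLeft (-(e + 1) : ℤ)).tsum_eq fun r ↦
      α r * q ^ r * baileyKernel q (n + (e + 1)) n r).symm
  have hsum := summable_mul_baileyKernel q (fun r ↦ α r * q ^ r) (n + (e + 1)) n
  rw [h n, tsum_congr hkernel, Nat.cast_succ,
    (summable_mul_baileyKernel q α (n + (e + 1)) n).tsum_sub (hsum.mul_left _), tsum_mul_left,
    hzero, mul_zero, sub_zero]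

/-- The term `q^{u(u+c)} / ((q;q)_{m-u} (q;q)_u (q;q)_{u+c})` of the `q`-Vandermonde sum. -/
noncomputable def vandermondeTerm (q : ℂ) (c m u : ℤ) : ℂ :=
  q ^ (u ^ 2 + c * u) * (qPochInv q (m - u) * qPochInv q u * qPochInv q (u + c))

theorem vandermondeTerm_eq_zero (q : ℂ) (c : ℤ) {m u : ℤ} (hu : u ∉ Set.Icc 0 m) :
    vandermondeTerm q c m u = 0 := by
  rw [Set.mem_Icc, not_and_or] at hu
  obtain hu | hu := hu
  · simp [vandermondeTerm, qPochInv_of_neg q (not_le.1 hu)]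
  · simp [vandermondeTerm, qPochInv_of_neg q (sub_neg.2 (not_le.1 hu))]

theorem summable_vandermondeTerm (q : ℂ) (c m : ℤ) : Summable (vandermondeTerm q c m) :=
  summable_of_hasFiniteSupport <| (Set.finite_Icc 0 m).subset fun _ hu ↦
    of_not_not fun h ↦ hu (vandermondeTerm_eq_zero q c h)

theorem vandermondeTerm_add_one (hq : q ≠ 0) (hq1 : ‖q‖ < 1) (c m u : ℤ) :
    (1 - q ^ (m + 1)) * vandermondeTerm q c (m + 1) u =
      vandermondeTerm q c m u + q ^ (m + c + 1) * vandermondeTerm q (c + 1) m (u - 1) := by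
  have hpow : q ^ (m + c + 1) * q ^ ((u - 1) ^ 2 + (c + 1) * (u - 1)) =
      q ^ (m + 1 - u) * q ^ (u ^ 2 + c * u) := by
    rw [← zpow_add₀ hq, ← zpow_add₀ hq]
    ring_nf
  have hleft := qPochInv_sub_one hq1 (m + 1 - u)
  rw [vandermondeTerm, vandermondeTerm, vandermondeTerm, ← mul_assoc (q ^ (m + c + 1)), hpow,
    show m - u = m + 1 - u - 1 by ring, hleft, show m - (u - 1) = m + 1 - u by ring,
    show u - 1 + (c + 1) = u + c by ring, qPochInv_sub_one hq1 u,
    show m + 1 = (m + 1 - u) + u by ring, zpow_add₀ hq, add_sub_cancel_right]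
  ring

theorem tsum_vandermondeTerm (hq : q ≠ 0) (hq1 : ‖q‖ < 1) (c : ℤ) (m : ℕ) :
    ∑' u, vandermondeTerm q c m u = qPochInv q m * qPochInv q (m + c) := by
  induction m generalizing c with
  | zero =>
    rw [tsum_eq_single 0 fun u hu ↦ vandermondeTerm_eq_zero q c (by simpa)]
    simp [vandermondeTerm]
  | succ m ih =>
    have hne : 1 - q ^ (m + 1 : ℤ) ≠ 0 := one_sub_pow_ne_zero hq1 m.succ_ne_zero
    have hshift : ∑' u, vandermondeTerm q (c + 1) m (u - 1) =
        ∑' u, vandermondeTerm q (c + 1) m u :=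
      (Equiv.subRight (1 : ℤ)).tsum_eq _
    have hsum_shift : Summable fun u ↦ vandermondeTerm q (c + 1) m (u - 1) :=
      (Equiv.subRight (1 : ℤ)).summable_iff.2 (summable_vandermondeTerm q (c + 1) m)
    have hm := qPochInv_sub_one hq1 (m + 1)
    have hmc := qPochInv_sub_one hq1 (m + c + 1)
    rw [add_sub_cancel_right] at hm hmc
    refine mul_left_cancel₀ hne ?_
    rw [Nat.cast_succ, ← tsum_mul_left, tsum_congr (vandermondeTerm_add_one hq hq1 c m),
      (summable_vandermondeTerm q c m).tsum_add (hsum_shift.mul_left _), tsum_mul_left, hshift,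
      ih, ih, ← mul_assoc (1 - _), ← hm, hmc, ← add_assoc, add_right_comm (m : ℤ) 1 c]
    ring

theorem baileyKernel_transform (hq : q ≠ 0) (hq1 : ‖q‖ < 1) (e n r : ℤ) :
    ∑' s : ℤ, q ^ (s ^ 2 + e * s) * qPochInv q (n - s) * baileyKernel q (s + e) s r =
      q ^ (r ^ 2 + e * r) * baileyKernel q (n + e) n r := by
  obtain hr | hr := lt_or_ge n r
  · have hzero (s : ℤ) : qPochInv q (n - s) * qPochInv q (s - r) = 0 := by
      obtain hs | hs := lt_or_ge n s
      · rw [qPochInv_of_neg q (by lia), zero_mul]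
      · rw [qPochInv_of_neg q (m := s - r) (by lia), mul_zero]
    simp [baileyKernel, qPochInv_of_neg q (sub_neg.2 hr), mul_assoc, mul_left_comm, hzero]
  · obtain ⟨m, rfl⟩ := Int.le.dest hr
    have hvand := tsum_vandermondeTerm hq hq1 (2 * r + e) m
    have hright : baileyKernel q (r + m + e) (r + m) r =
        qPochInv q m * qPochInv q (m + (2 * r + e)) := by
      rw [baileyKernel, mul_comm]
      congr 2 <;> ring
    rw [hright, ← hvand, ← tsum_mul_left, ← (Equiv.addLeft r).tsum_eq]
    refine tsum_congr fun u ↦ ?_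
    rw [Equiv.coe_addLeft, vandermondeTerm, baileyKernel, ← mul_assoc (q ^ (r ^ 2 + e * r)),
      ← zpow_add₀ hq]
    ring_nf

/-- The transformation of the `β` side of a Bailey pair relative to `q ^ e` in which both
parameters of Bailey's lemma are sent to infinity. -/
noncomputable def baileyStep (q : ℂ) (e : ℕ) (β : ℕ → ℂ) (n : ℕ) : ℂ :=
  ∑' s : ℕ, q ^ (s ^ 2 + e * s) * qPochInv q (n - s) * β s

theorem baileyStep_single (q : ℂ) (e n : ℕ) : baileyStep q e (Pi.single 0 1) n = qPochInv q n := by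
  rw [baileyStep, tsum_eq_single 0 fun s hs ↦ by simp [hs]]
  simp

theorem summable_baileyStep_kernel (q : ℂ) (α : ℤ → ℂ) (e n : ℕ) :
    Summable (Function.uncurry fun (s : ℕ) (r : ℤ) ↦ q ^ (s ^ 2 + e * s) * qPochInv q (n - s) *
      (α r * baileyKernel q (s + e) s r)) := by
  refine summable_of_hasFiniteSupport <|
    ((Set.finite_Iic n).prod (Set.finite_Icc (-(n + e) : ℤ) n)).subset fun ⟨s, r⟩ hne ↦ ?_
  have hs : s ≤ n := by
    by_contra! hs
    simp [qPochInv_of_neg q (m := n - s) (by lia)] at hne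
  have hr : r ∈ Set.Icc (-(s + e) : ℤ) s := by
    by_contra hr
    simp [baileyKernel_eq_zero q hr] at hne
  simp only [Set.mem_Icc, Set.mem_prod, Set.mem_Iic] at hr ⊢
  lia

theorem tsum_natCast_baileyKernel_transform (hq : q ≠ 0) (hq1 : ‖q‖ < 1) {e : ℕ} (he : e ≤ 1)
    (n : ℕ) (r : ℤ) :
    ∑' s : ℕ, q ^ (s ^ 2 + e * s) * qPochInv q (n - s) * baileyKernel q (s + e) s r =
      q ^ (r ^ 2 + e * r) * baileyKernel q (n + e) n r := by
  have hrange : Function.support (fun s : ℤ ↦ q ^ (s ^ 2 + e * s) * qPochInv q (n - s) *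
      baileyKernel q (s + e) s r) ⊆ Set.range ((↑) : ℕ → ℤ) := by
    intro s hs
    have hr : r ∈ Set.Icc (-(s + e)) s := by
      by_contra hr
      simp [baileyKernel_eq_zero q hr] at hs
    rw [Set.mem_Icc] at hr
    exact ⟨s.toNat, Int.toNat_of_nonneg (by lia)⟩
  rw [← baileyKernel_transform hq hq1, ← Nat.cast_injective.tsum_eq hrange]
  exact tsum_congr fun s ↦ by rw [← zpow_natCast]; push_cast; rfl

theorem IsBaileyPair.step {e : ℕ} {α : ℤ → ℂ} {β : ℕ → ℂ} (h : IsBaileyPair q e α β)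
    (hq : q ≠ 0) (hq1 : ‖q‖ < 1) (he : e ≤ 1) :
    IsBaileyPair q e (fun r ↦ α r * q ^ (r ^ 2 + e * r)) (baileyStep q e β) := by
  intro n
  have hβ (s : ℕ) : q ^ (s ^ 2 + e * s) * qPochInv q (n - s) * β s =
      ∑' r, q ^ (s ^ 2 + e * s) * qPochInv q (n - s) * (α r * baileyKernel q (s + e) s r) := by
    rw [h s, tsum_mul_left]
  rw [baileyStep, tsum_congr hβ, ← Summable.tsum_comm (summable_baileyStep_kernel q α e n)]
  refine tsum_congr fun r ↦ ?_
  rw [mul_assoc, ← tsum_natCast_baileyKernel_transform hq hq1 he, ← tsum_mul_left]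
  exact tsum_congr fun s ↦ mul_left_comm _ _ _

/-- A tuple continued by zeros, so that the convention `s_k = 0` of the multisums is built in. -/
def zeroExtend {d : ℕ} (s : Fin d → ℕ) : ℕ → ℕ := fun m ↦ if h : m < d then s ⟨m, h⟩ else 0

theorem zeroExtend_cons_zero {d : ℕ} (a : ℕ) (s : Fin d → ℕ) :
    zeroExtend (Fin.cons a s : Fin (d + 1) → ℕ) 0 = a := by
  simp [zeroExtend]

theorem zeroExtend_cons_succ {d : ℕ} (a : ℕ) (s : Fin d → ℕ) (m : ℕ) :
    zeroExtend (Fin.cons a s : Fin (d + 1) → ℕ) (m + 1) = zeroExtend s m := by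
  by_cases h : m < d
  · rw [zeroExtend, zeroExtend, dif_pos h, dif_pos (Nat.succ_lt_succ h)]
    exact Fin.cons_succ (α := fun _ ↦ ℕ) a s ⟨m, h⟩
  · simp [zeroExtend, h]

theorem zeroExtend_apply {d : ℕ} (s : Fin d → ℕ) (m : Fin d) : zeroExtend s m = s m :=
  dif_pos m.isLt

theorem zeroExtend_of_le {d : ℕ} (s : Fin d → ℕ) {m : ℕ} (hm : d ≤ m) : zeroExtend s m = 0 :=
  dif_neg hm.not_gt

theorem antitone_zeroExtend_iff {d : ℕ} {s : Fin d → ℕ} :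
    Antitone (zeroExtend s) ↔ Antitone s := by
  refine ⟨fun h i j hij ↦ ?_, fun h m m' hmm' ↦ ?_⟩
  · simpa only [zeroExtend_apply] using h (Fin.val_fin_le.2 hij)
  · obtain hm' | hm' := lt_or_ge m' d
    · have hle := h (Fin.mk_le_mk.2 hmm' : (⟨m, hmm'.trans_lt hm'⟩ : Fin d) ≤ ⟨m', hm'⟩)
      rwa [← zeroExtend_apply s, ← zeroExtend_apply s] at hle
    · simp [zeroExtend_of_le s hm']

/-- The summand `∏_m q^{t_m^2 + ε_m t_m} / (q;q)_{t_m - t_{m+1}}` over `m < d`; it vanishes unless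
`t_0 ≥ ⋯ ≥ t_d`, so the multisums may run over all tuples. -/
noncomputable def multisumTerm (q : ℂ) (ε t : ℕ → ℕ) (d : ℕ) : ℂ :=
  ∏ m ∈ Finset.range d, q ^ (t m ^ 2 + ε m * t m) * qPochInv q (t m - t (m + 1))

/-- The multisum with outer variable `n` produced by `d` successive Bailey steps, the `m`-th one
relative to `q ^ ε m`. -/
noncomputable def multisum (q : ℂ) (ε : ℕ → ℕ) (d n : ℕ) : ℂ :=
  ∑' s : Fin d → ℕ, qPochInv q (n - zeroExtend s 0) * multisumTerm q ε (zeroExtend s) d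

theorem multisumTerm_cons (q : ℂ) (ε : ℕ → ℕ) {d : ℕ} (a : ℕ) (s : Fin d → ℕ) :
    multisumTerm q ε (zeroExtend (Fin.cons a s : Fin (d + 1) → ℕ)) (d + 1) =
      q ^ (a ^ 2 + ε 0 * a) * (qPochInv q (a - zeroExtend s 0) *
        multisumTerm q (fun m ↦ ε (m + 1)) (zeroExtend s) d) := by
  simp only [multisumTerm, Finset.prod_range_succ', zeroExtend_cons_zero, zeroExtend_cons_succ]
  ring

theorem summable_prod_apply {α : Type*} {d : ℕ} {f : Fin d → α → ℝ} (hf : ∀ i a, 0 ≤ f i a)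
    (hsum : ∀ i, Summable (f i)) : Summable fun s : Fin d → α ↦ ∏ i, f i (s i) := by
  induction d with
  | zero => exact Summable.of_finite
  | succ d ih =>
    have htail := ih (fun i ↦ hf i.succ) fun i ↦ hsum i.succ
    rw [← (Fin.consEquiv fun _ ↦ α).summable_iff]
    refine ((hsum 0).mul_of_nonneg htail (hf 0) fun s ↦ Finset.prod_nonneg fun i _ ↦ hf _ _).congr
      fun p ↦ ?_
    simp [Fin.prod_univ_succ, Fin.consEquiv]

theorem exists_summable_norm_multisumTerm_le (hq1 : ‖q‖ < 1) (ε : ℕ → ℕ) (d : ℕ) :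
    ∃ B : (Fin d → ℕ) → ℝ, Summable B ∧ ∀ s, ‖multisumTerm q ε (zeroExtend s) d‖ ≤ B s := by
  obtain ⟨C, hC⟩ := exists_norm_qPochInv_le hq1
  have hC0 : 0 ≤ C := (norm_nonneg _).trans (hC 0)
  have hgeom : Summable fun n : ℕ ↦ ‖q‖ ^ n * C :=
    (summable_geometric_of_lt_one (norm_nonneg q) hq1).mul_right C
  have hB := summable_prod_apply (d := d) (f := fun _ n ↦ ‖q‖ ^ n * C)
    (fun _ _ ↦ by positivity) fun _ ↦ hgeom
  refine ⟨_, hB, fun s ↦ ?_⟩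
  rw [multisumTerm, Finset.prod_range, norm_prod]
  refine Finset.prod_le_prod (fun _ _ ↦ norm_nonneg _) fun i _ ↦ ?_
  rw [norm_mul, norm_pow, zeroExtend_apply]
  have hexp : s i ≤ s i ^ 2 + ε i * s i :=
    (Nat.le_self_pow two_ne_zero _).trans (Nat.le_add_right ..)
  exact mul_le_mul (pow_le_pow_of_le_one (norm_nonneg q) hq1.le hexp) (hC _) (norm_nonneg _)
    (by positivity)

theorem summable_multisum (hq1 : ‖q‖ < 1) (ε : ℕ → ℕ) (d n : ℕ) :
    Summable fun s : Fin d → ℕ ↦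
      qPochInv q (n - zeroExtend s 0) * multisumTerm q ε (zeroExtend s) d := by
  obtain ⟨C, hC⟩ := exists_norm_qPochInv_le hq1
  obtain ⟨B, hB, hle⟩ := exists_summable_norm_multisumTerm_le hq1 ε d
  refine .of_norm_bounded (hB.mul_left C) fun s ↦ ?_
  rw [norm_mul]
  exact mul_le_mul (hC _) (hle s) (norm_nonneg _) ((norm_nonneg _).trans (hC 0))

theorem multisum_zero (q : ℂ) (ε : ℕ → ℕ) (n : ℕ) : multisum q ε 0 n = qPochInv q n := by
  simp [multisum, multisumTerm, zeroExtend]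

theorem multisum_succ (hq1 : ‖q‖ < 1) (ε : ℕ → ℕ) (d : ℕ) :
    multisum q ε (d + 1) = baileyStep q (ε 0) (multisum q (fun m ↦ ε (m + 1)) d) := by
  funext n
  have hsum := (Fin.consEquiv fun _ ↦ ℕ).summable_iff.2 (summable_multisum hq1 ε (d + 1) n)
  rw [multisum, ← (Fin.consEquiv fun _ ↦ ℕ).tsum_eq, baileyStep]
  refine hsum.tsum_prod.trans (tsum_congr fun a ↦ ?_)
  rw [multisum, ← tsum_mul_left]
  refine tsum_congr fun s ↦ ?_
  have hcons : (Fin.consEquiv fun _ ↦ ℕ) (a, s) = (Fin.cons a s : Fin (d + 1) → ℕ) := rfl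
  rw [Function.comp_apply, hcons, multisumTerm_cons, zeroExtend_cons_zero]
  ring

theorem tendsto_multisum (hq1 : ‖q‖ < 1) (ε : ℕ → ℕ) (d : ℕ) :
    Tendsto (multisum q ε d) atTop
      (𝓝 ((qPochInf q q)⁻¹ * ∑' s : Fin d → ℕ, multisumTerm q ε (zeroExtend s) d)) := by
  obtain ⟨C, hC⟩ := exists_norm_qPochInv_le hq1
  obtain ⟨B, hB, hle⟩ := exists_summable_norm_multisumTerm_le hq1 ε d
  rw [← tsum_mul_left]
  refine tendsto_tsum_of_dominated_convergence (hB.mul_left C) (fun s ↦ ?_)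
    (.of_forall fun n s ↦ ?_)
  · simpa only [sub_eq_add_neg] using (tendsto_qPochInv_natCast_add hq1 _).mul_const _
  · rw [norm_mul]
    exact mul_le_mul (hC _) (hle s) (norm_nonneg _) ((norm_nonneg _).trans (hC 0))

theorem isBaileyPair_multisum_one (hq : q ≠ 0) (hq1 : ‖q‖ < 1) (i : ℕ) :
    IsBaileyPair q 1 (thetaTerm (q ^ (2 * i + 3)) (q ^ (2 * i + 2)))
      (multisum q (fun _ ↦ 1) i) := by
  induction i with
  | zero =>
    have hstep := (isBaileyPair_thetaTerm_one hq hq1 1).step hq hq1 le_rfl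
    have hβ : baileyStep q 1 (Pi.single 0 1) = multisum q (fun _ ↦ 1) 0 :=
      funext fun n ↦ by rw [baileyStep_single, multisum_zero]
    simp only [hβ, thetaTerm_mul_zpow hq] at hstep
    convert hstep using 2 <;> norm_cast <;> ring
  | succ i ih =>
    have hstep := ih.step hq hq1 le_rfl
    simp only [thetaTerm_mul_zpow hq] at hstep
    rw [multisum_succ hq1]
    convert hstep using 2 <;> norm_cast <;> ring

theorem isBaileyPair_multisum_ite (hq : q ≠ 0) (hq1 : ‖q‖ < 1) (l i : ℕ) :
    IsBaileyPair q 0 (thetaTerm (q ^ (2 * (l + i + 1) + 1)) (q ^ (l + i + 1 + i + 1)))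
      (multisum q (fun m ↦ if l ≤ m then 1 else 0) (l + i)) := by
  induction l with
  | zero =>
    have hpair := (isBaileyPair_multisum_one hq hq1 i).lower hq hq1 fun r ↦ by
      rw [pow_succ' q (2 * i + 2)]
      simpa using thetaTerm_neg_one_sub hq (pow_ne_zero (2 * i + 2) hq) r
    convert hpair using 2 <;> simp only [zero_add, zero_le, if_true] <;> ring_nf
  | succ l ih =>
    have hstep := ih.step hq hq1 zero_le_one
    simp only [thetaTerm_mul_zpow hq] at hstep
    rw [add_right_comm l 1 i, multisum_succ hq1]
    simp only [add_le_add_iff_right]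
    convert hstep using 2 <;> norm_cast <;> ring

theorem antitone_of_multisumTerm_ne_zero {ε : ℕ → ℕ} {d : ℕ} {s : Fin d → ℕ}
    (hs : multisumTerm q ε (zeroExtend s) d ≠ 0) : Antitone s := by
  refine antitone_zeroExtend_iff.1 (antitone_nat_of_succ_le fun m ↦ ?_)
  obtain hm | hm := lt_or_ge m d
  · by_contra! hlt
    refine hs (Finset.prod_eq_zero (Finset.mem_range.2 hm) ?_)
    rw [qPochInv_of_neg q (by lia), mul_zero]
  · simp [zeroExtend_of_le s (hm.trans m.le_succ)]

theorem multisumTerm_of_antitone (q : ℂ) (l : ℕ) {d : ℕ} {s : Fin d → ℕ} (hs : Antitone s) :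
    multisumTerm q (fun m ↦ if l ≤ m then 1 else 0) (zeroExtend s) d =
      q ^ (∑ m ∈ Finset.range d, zeroExtend s m ^ 2 + ∑ m ∈ Finset.Ico l d, zeroExtend s m) /
        ∏ m ∈ Finset.range d, qPoch q q (zeroExtend s m - zeroExtend s (m + 1)) := by
  have hlinear : ∑ m ∈ Finset.Ico l d, zeroExtend s m =
      ∑ m ∈ Finset.range d, (if l ≤ m then 1 else 0) * zeroExtend s m := by
    simp only [ite_mul, one_mul, zero_mul, ← Finset.sum_filter]
    congr 1
    ext m
    simp [and_comm]
  rw [hlinear, ← Finset.sum_add_distrib, ← Finset.prod_pow_eq_pow_sum, ← Finset.prod_div_distrib,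
    multisumTerm]
  refine Finset.prod_congr rfl fun m _ ↦ ?_
  rw [← Nat.cast_sub (antitone_zeroExtend_iff.2 hs m.le_succ), qPochInv_natCast, div_eq_mul_inv]

theorem tsum_multisumTerm (hq : q ≠ 0) (hq1 : ‖q‖ < 1) {d i : ℕ} (hi : i ≤ d) :
    ∑' s : Fin d → ℕ, multisumTerm q (fun m ↦ if d - i ≤ m then 1 else 0) (zeroExtend s) d =
      qPochInf (q ^ (2 * (d + 1) + 1)) (q ^ (2 * (d + 1) + 1)) *
        qPochInf (q ^ (d + 1 - i)) (q ^ (2 * (d + 1) + 1)) *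
        qPochInf (q ^ (d + 1 + i + 1)) (q ^ (2 * (d + 1) + 1)) / qPochInf q q := by
  obtain ⟨l, rfl⟩ := Nat.exists_eq_add_of_le' hi
  have hQ : q ^ (2 * (l + i + 1) + 1) ≠ 0 := pow_ne_zero _ hq
  have hQ1 : ‖q ^ (2 * (l + i + 1) + 1)‖ < 1 := by
    rw [norm_pow]
    exact pow_lt_one₀ (norm_nonneg q) hq1 (Nat.succ_ne_zero _)
  have hz : q ^ (l + i + 1 + i + 1) ≠ 0 := pow_ne_zero _ hq
  have hdiv : q ^ (2 * (l + i + 1) + 1) / q ^ (l + i + 1 + i + 1) = q ^ (l + i + 1 - i) := by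
    rw [div_eq_iff hz, ← pow_add]
    congr 1
    lia
  have hlim := tendsto_nhds_unique (tendsto_multisum hq1 _ _)
    ((isBaileyPair_multisum_ite hq hq1 l i).tendsto hq1 (summable_thetaTerm hQ hQ1 hz))
  rw [jacobi_triple_product hQ hQ1 hz, hdiv] at hlim
  have hne := qPochInf_self_ne_zero hq1
  rw [Nat.add_sub_cancel]
  field_simp at hlim ⊢
  exact hlim

end AndrewsGordon

/-- The Andrews–Gordon identities.  The tuple `s` encodes `s_1 ≥ s_2 ≥ ⋯ ≥ s_{k-1} ≥ 0`
via `s_m = t (m-1)`, with the convention `s_k = 0`. -/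
theorem andrews_gordon (q : ℂ) (h0 : 0 < ‖q‖) (h1 : ‖q‖ < 1)
    (k i : ℕ) (hk : 2 ≤ k) (hi : i ≤ k - 1) :
    (∑' s : {s : Fin (k - 1) → ℕ // Antitone s},
      (let t : ℕ → ℕ := fun m => if h : m < k - 1 then s.1 ⟨m, h⟩ else 0
       q ^ (∑ m ∈ Finset.range (k - 1), (t m) ^ 2 + ∑ m ∈ Finset.Ico (k - 1 - i) (k - 1), t m) /
         ∏ m ∈ Finset.range (k - 1), qPoch q q (t m - t (m + 1)))) =
      qPochInf (q ^ (2 * k + 1)) (q ^ (2 * k + 1)) * qPochInf (q ^ (k - i)) (q ^ (2 * k + 1)) *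
        qPochInf (q ^ (k + i + 1)) (q ^ (2 * k + 1)) / qPochInf q q := by
  have hq : q ≠ 0 := norm_pos_iff.1 h0
  obtain ⟨d, rfl⟩ : ∃ d, k = d + 1 := ⟨k - 1, by lia⟩
  refine Eq.trans ?_ (AndrewsGordon.tsum_multisumTerm hq h1 hi)
  rw [← tsum_subtype_eq_of_support_subset (s := {s | Antitone s})
    fun _ ↦ AndrewsGordon.antitone_of_multisumTerm_ne_zero]
  exact tsum_congr fun s ↦ (AndrewsGordon.multisumTerm_of_antitone q _ s.2).symm
end
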